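/- arXiv:2507.08796 — 8 statements merged into one kernel-verified Lean document; each statement's English description precedes it below -/
import Mathlib

section
/- If f : List α → List α is filter-equivariant, then for every list xs : List α, every element occurring in f xs also occurs in xs (i.e. the set of values of f xs is contained in the set of values of xs). As a consequence, f applied to the empty list yields the empty list. -/
/-- A function `f : List α → List α` is filter-equivariant if it commutes with
`List.filter p` for every Boolean predicate `p`. -/
def FilterEquivariant {α : Type*} (f : List α → List α) : Prop :=
  ∀ (p : α → Bool) (xs : List α), f (xs.filter p) = (f xs).filter p

theorem filterEquivariant_no_new_values {α : Type*} (f : List α → List α)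
    (hf : FilterEquivariant f) :
    (∀ xs : List α, ∀ y ∈ f xs, y ∈ xs) ∧ f [] = [] := by
  classical
  have key : ∀ xs : List α, ∀ y ∈ f xs, y ∈ xs := by
    intro xs y hy
    have h := hf (fun a => decide (a ∈ xs)) xs
    have hx : xs.filter (fun a => decide (a ∈ xs)) = xs := by
      rw [List.filter_eq_self]
      intro a ha
      simpa using ha
    rw [hx] at h
    rw [h, List.mem_filter] at hy
    simpa using hy.2
  exact ⟨key, List.eq_nil_iff_forall_not_mem.mpr fun y hy => by simpa using key [] y hy⟩
end

section
/- Let α have decidable equality and let f : List α → List α be filter-equivariant. Then f maps constant lists to constant lists: for every x : α and n : ℕ there exists m : ℕ such that f (List.replicate n x) = List.replicate m x. -/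
theorem filterEquivariant_replicate {α : Type*} [DecidableEq α]
    (f : List α → List α) (hf : FilterEquivariant f) (x : α) (n : ℕ) :
    ∃ m : ℕ, f (List.replicate n x) = List.replicate m x := by
  have h := hf (fun y => decide (y = x)) (List.replicate n x)
  have e : (List.replicate n x).filter (fun y => decide (y = x)) = List.replicate n x := by
    simp
  rw [e] at h
  refine ⟨(f (List.replicate n x)).length, List.eq_replicate_iff.2 ⟨rfl, fun b hb => ?_⟩⟩
  rw [h] at hb
  simpa using (List.mem_filter.1 hb).2
end

section
/- Let α have decidable equality and let f : List α → List α be filter-equivariant. Define the occurrence function Φ : α → ℕ → ℕ by Φ x n = (f (List.replicate n x)).length. Then for every list xs : List α and every x : α, if x occurs n times in xs then x occurs Φ x n times in f xs; that is, (f xs).count x = Φ x (xs.count x) for all x occurring in xs. -/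
/-- The occurrence function of `f`: `Φ x n` is the length of `f` applied to
`n` copies of `x`. -/
def occ {α : Type*} (f : List α → List α) (x : α) (n : ℕ) : ℕ :=
  (f (List.replicate n x)).length

theorem filterEquivariant_count {α : Type*} [DecidableEq α]
    (f : List α → List α) (hf : FilterEquivariant f) (xs : List α) (x : α)
    (hx : x ∈ xs) :
    (f xs).count x = occ f x (xs.count x) := by
  unfold occ
  rw [← List.filter_beq, hf, ← List.countP_eq_length_filter, List.count]
end

section
/- Let α have decidable equality and let f : List α → List α be filter-equivariant. Then for every list xs : List α, the list f xs is a permutation of the concatenation, over the distinct elements x of xs, of List.replicate (Φ x (xs.count x)) x, where Φ x n = (f (List.replicate n x)).length. Equivalently, f xs is a permutation of xs.dedup.flatMap (fun x => f (List.replicate (xs.count x) x)). -/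
theorem count_flatMap_replicate_aux {α : Type*} [DecidableEq α] (g : α → ℕ) (a : α)
    (l : List α) (hl : l.Nodup) :
    (l.flatMap fun x => List.replicate (g x) x).count a = if a ∈ l then g a else 0 := by
  induction l with
  | nil => simp
  | cons b l ih =>
    rw [List.nodup_cons] at hl
    rw [List.flatMap_cons, List.count_append, ih hl.2, List.count_replicate]
    by_cases h : b = a
    · subst h
      simp [hl.1]
    · have h2 : a ≠ b := fun e => h e.symm
      simp [h, h2]

theorem filterEquivariant_perm_concat_replicate {α : Type*} [DecidableEq α]
    (f : List α → List α) (hf : FilterEquivariant f) (xs : List α) :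
    (f xs).Perm
      (xs.dedup.flatMap fun x =>
        List.replicate (f (List.replicate (xs.count x) x)).length x) := by
  rw [List.perm_iff_count]
  intro a
  rw [count_flatMap_replicate_aux (fun x => (f (List.replicate (xs.count x) x)).length) a _
    (List.nodup_dedup xs)]
  have h1 : f (List.replicate (xs.count a) a) = List.replicate ((f xs).count a) a := by
    have h := hf (fun x => x == a) xs
    rwa [List.filter_beq, List.filter_beq] at h
  have h0 : f [] = [] := by
    have h := hf (fun _ => false) []
    simpa using h
  split_ifs with hm
  · simp only [h1, List.length_replicate]
  · rw [List.mem_dedup] at hm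
    rw [List.count_eq_zero_of_not_mem hm, List.replicate_zero, h0] at h1
    have h2 := congrArg List.length h1
    simpa using h2.symm
end

section
/- For every linear order α and every Boolean predicate p : α → Bool, sorting commutes with filtering: (xs.filter p).mergeSort (· ≤ ·) = (xs.mergeSort (· ≤ ·)).filter p for every list xs : List α. In other words, the sort function is filter-equivariant. -/
theorem mergeSort_filterEquivariant {α : Type*} [LinearOrder α]
    (p : α → Bool) (xs : List α) :
    (xs.filter p).mergeSort (· ≤ ·) = (xs.mergeSort (· ≤ ·)).filter p :=
  ((List.mergeSort_perm _ _).trans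
    ((List.mergeSort_perm xs _).filter p).symm).eq_of_pairwise' (r := (· ≤ ·))
    (List.pairwise_mergeSort' (· ≤ ·) _)
    ((List.pairwise_mergeSort' (· ≤ ·) xs).filter p)
end

section
/- Let α have decidable equality and let xs, ys : List α be lists such that xs has at least three distinct elements (xs.toFinset.card ≥ 3). If for every x occurring in xs, xs.filter (· ≠ x) = ys.filter (· ≠ x), then xs = ys. That is, a list with at least three distinct elements is uniquely determined by (and can be reconstructed from) the collection of its one-element-removed filtered versions. -/
theorem eq_of_three_filters {α : Type*} [DecidableEq α] (a b c : α)
    (hab : a ≠ b) (hac : a ≠ c) (hbc : b ≠ c) : ∀ xs ys : List α,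
    (∀ z, (z = a ∨ z = b ∨ z = c) → xs.filter (· ≠ z) = ys.filter (· ≠ z)) → xs = ys := by
  have key : ∀ x y : α, ∃ z, (z = a ∨ z = b ∨ z = c) ∧ x ≠ z ∧ y ≠ z := by
    intro x y
    by_contra hcon
    push Not at hcon
    have h1 := hcon a (by simp)
    have h2 := hcon b (by simp)
    have h3 := hcon c (by simp)
    by_cases ha : x = a <;> by_cases hb : x = b <;> by_cases hc : x = c <;> simp_all
  intro xs
  induction xs with
  | nil =>
    intro ys h
    cases ys with
    | nil => rfl
    | cons y ys =>
      obtain ⟨z, hz, h1, -⟩ := key y y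
      have := h z hz
      simp [h1] at this
  | cons x xs ih =>
    intro ys h
    cases ys with
    | nil =>
      obtain ⟨z, hz, h1, -⟩ := key x x
      have := h z hz
      simp [h1] at this
    | cons y ys =>
      obtain ⟨z, hz, h1, h2⟩ := key x y
      have hxy : x = y := by
        have := h z hz
        simp [h1, h2] at this
        exact this.1
      subst hxy
      rw [ih ys]
      intro w hw
      have := h w hw
      by_cases hxw : x = w
      · simpa [hxw] using this
      · simpa [hxw] using this

theorem eq_of_filter_ne_eq {α : Type*} [DecidableEq α] (xs ys : List α)
    (hcard : 3 ≤ xs.toFinset.card)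
    (h : ∀ x ∈ xs, xs.filter (· ≠ x) = ys.filter (· ≠ x)) :
    xs = ys := by
  obtain ⟨a, b, c, ha, hb, hc, hab, hac, hbc⟩ := Finset.two_lt_card_iff.mp hcard
  rw [List.mem_toFinset] at ha hb hc
  apply eq_of_three_filters a b c hab hac hbc
  rintro z (rfl | rfl | rfl)
  · exact h _ ha
  · exact h _ hb
  · exact h _ hc
end

section
/- Let α have decidable equality, let f, g : List α → List α be filter-equivariant, and let xs : List α have at least three distinct elements (xs.toFinset.card ≥ 3). If f (xs.filter (· ≠ x)) = g (xs.filter (· ≠ x)) for every x occurring in xs, then f xs = g xs. That is, a filter-equivariant function's output on xs is uniquely determined by its outputs on the one-element-removed filtered versions of xs. -/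
theorem list_eq_of_filter_ne {α : Type*} [DecidableEq α] (S : Finset α) (hS : 3 ≤ S.card) :
    ∀ ys zs : List α,
      (∀ x ∈ S, ys.filter (fun a => decide (a ≠ x)) = zs.filter (fun a => decide (a ≠ x))) →
      ys = zs := by
  have pick : ∀ a b : α, ∃ x ∈ S, a ≠ x ∧ b ≠ x := by
    intro a b
    have hlt : ({a, b} : Finset α).card < S.card :=
      lt_of_le_of_lt Finset.card_le_two (by omega)
    obtain ⟨x, hx, hn⟩ := Finset.exists_mem_notMem_of_card_lt_card hlt
    simp only [Finset.mem_insert, Finset.mem_singleton, not_or] at hn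
    exact ⟨x, hx, Ne.symm hn.1, Ne.symm hn.2⟩
  intro ys
  induction ys with
  | nil =>
    intro zs h
    cases zs with
    | nil => rfl
    | cons b zs =>
      obtain ⟨x, hx, hb, -⟩ := pick b b
      have := h x hx
      simp [hb] at this
  | cons a ys ih =>
    intro zs h
    cases zs with
    | nil =>
      obtain ⟨x, hx, ha, -⟩ := pick a a
      have := h x hx
      simp [ha] at this
    | cons b zs =>
      have hab : a = b := by
        obtain ⟨x, hx, ha, hb⟩ := pick a b
        have := h x hx
        simp [ha, hb] at this
        exact this.1
      subst hab
      congr 1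
      apply ih
      intro x hx
      have := h x hx
      by_cases hax : a = x
      · simpa [hax] using this
      · simpa [hax] using this

theorem filterEquivariant_determined_by_one_removed {α : Type*} [DecidableEq α]
    (f g : List α → List α) (hf : FilterEquivariant f) (hg : FilterEquivariant g)
    (xs : List α) (hcard : 3 ≤ xs.toFinset.card)
    (h : ∀ x ∈ xs, f (xs.filter (· ≠ x)) = g (xs.filter (· ≠ x))) :
    f xs = g xs := by
  apply list_eq_of_filter_ne xs.toFinset hcard
  intro x hx
  have := h x (List.mem_toFinset.mp hx)
  rw [hf, hg] at this
  exact this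
end

section
/- Let α have decidable equality, let f, g : List α → List α be filter-equivariant, and let xs : List α have at least three distinct elements (xs.toFinset.card ≥ 3). Suppose that for all x, y occurring in xs, f and g agree on the sublist of xs retaining only the values x and y, i.e. f (xs.filter (fun z => z = x ∨ z = y)) = g (xs.filter (fun z => z = x ∨ z = y)). Then f xs = g xs. That is, any filter-equivariant function's output on xs is uniquely determined by its outputs on the sublists of xs with two unique elements. -/
theorem eq_of_filter_pairs {α : Type*} [DecidableEq α] (S : List α) :
    ∀ (l m : List α), (∀ a ∈ l, a ∈ S) → (∀ a ∈ m, a ∈ S) →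
      (∀ x ∈ S, ∀ y ∈ S, l.filter (fun z => z = x ∨ z = y) = m.filter (fun z => z = x ∨ z = y)) →
      l = m := by
  intro l
  induction l with
  | nil =>
    intro m _ hm h
    cases m with
    | nil => rfl
    | cons b m =>
      have := h b (hm b (by simp)) b (hm b (by simp))
      simp at this
  | cons a l ih =>
    intro m hl hm h
    have ha := hl a (by simp)
    cases m with
    | nil =>
      have := h a ha a ha
      simp at this
    | cons b m =>
      have hb := hm b (by simp)
      have hab : a = b := by
        have := h a ha b hb
        simp at this
        exact this.1
      subst hab
      congr 1
      refine ih m (fun c hc => hl c (by simp [hc])) (fun c hc => hm c (by simp [hc])) ?_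
      intro x hx y hy
      have := h x hx y hy
      by_cases hc : a = x ∨ a = y
      · rw [List.filter_cons_of_pos (by simpa using hc),
          List.filter_cons_of_pos (by simpa using hc)] at this
        exact (List.cons.inj this).2
      · rw [List.filter_cons_of_neg (by simpa using hc),
          List.filter_cons_of_neg (by simpa using hc)] at this
        exact this

theorem FilterEquivariant.mem_of_mem {α : Type*} [DecidableEq α] {f : List α → List α}
    (hf : FilterEquivariant f) (xs : List α) : ∀ a ∈ f xs, a ∈ xs := by
  intro a ha
  have h := hf (fun z => decide (z ∈ xs)) xs
  rw [List.filter_eq_self.2 (by simp)] at h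
  rw [h] at ha
  simpa using (List.mem_filter.1 ha).2

theorem filterEquivariant_determined_by_two_unique {α : Type*} [DecidableEq α]
    (f g : List α → List α) (hf : FilterEquivariant f) (hg : FilterEquivariant g)
    (xs : List α) (hcard : 3 ≤ xs.toFinset.card)
    (h : ∀ x ∈ xs, ∀ y ∈ xs,
      f (xs.filter (fun z => z = x ∨ z = y)) = g (xs.filter (fun z => z = x ∨ z = y))) :
    f xs = g xs := by
  refine eq_of_filter_pairs xs _ _ (hf.mem_of_mem xs) (hg.mem_of_mem xs) ?_
  intro x hx y hy
  rw [← hf, ← hg]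
  exact h x hx y hy
end
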